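/- Suppose R = X_{i+2} = X_{i+4} = ∅ for some i. If ω(G) ≥ 5, then χ(G) = ω(G). -/

import Mathlib

open SimpleGraph

/-- The claw `K_{1,3}`: vertex 0 adjacent to 1, 2, 3. -/
def claw : SimpleGraph (Fin 4) := SimpleGraph.fromRel (fun a _ => a = 0)

/-- `4K_1`: the edgeless graph on four vertices. -/
def fourK1 : SimpleGraph (Fin 4) := ⊥

/-- `K_5 - e`: the complete graph on five vertices minus the edge {0,1}. -/
def K5e : SimpleGraph (Fin 5) :=
  SimpleGraph.fromRel (fun a b => ¬(a = 0 ∧ b = 1) ∧ ¬(a = 1 ∧ b = 0))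

/-- The 5-wheel: the cycle 0-1-2-3-4-0 together with hub 5 adjacent to all. -/
def wheel5 : SimpleGraph (Fin 6) :=
  SimpleGraph.fromRel (fun a b =>
    (a ≠ 5 ∧ b ≠ 5 ∧ b.val = (a.val + 1) % 5) ∨ a = 5 ∨ b = 5)

/-- The `C_5`-twin: the cycle 0-1-2-3-4-0 together with vertex 5, a true twin
of vertex 0 (adjacent to 0, 1 and 4). -/
def C5twin : SimpleGraph (Fin 6) :=
  SimpleGraph.fromRel (fun a b =>
    (a ≠ 5 ∧ b ≠ 5 ∧ b.val = (a.val + 1) % 5) ∨ (a = 5 ∧ (b = 0 ∨ b = 1 ∨ b = 4)))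

/-- The `P_5`-twin: the path 0-1-2-3-4 together with vertex 5, a true twin of
the middle vertex 2 (adjacent to 1, 2 and 3). -/
def P5twin : SimpleGraph (Fin 6) :=
  SimpleGraph.fromRel (fun a b =>
    (a ≠ 5 ∧ b ≠ 5 ∧ b.val = a.val + 1) ∨ (a = 5 ∧ (b = 1 ∨ b = 2 ∨ b = 3)))

/-- The chordless cycle on seven vertices. -/
def C7 : SimpleGraph (Fin 7) :=
  SimpleGraph.fromRel (fun a b => b.val = (a.val + 1) % 7)

/-- `G` is `H`-free: `G` contains no induced subgraph isomorphic to `H`,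
i.e. there is no graph embedding of `H` into `G`. -/
def Free {V W : Type*} (G : SimpleGraph V) (H : SimpleGraph W) : Prop :=
  IsEmpty (H ↪g G)

/-- `X_i`: vertices outside the five-cycle `v 0, …, v 4` whose neighbours on the
cycle are exactly `v i` and `v (i+1)`. -/
def cycX {V : Type*} (G : SimpleGraph V) (v : ZMod 5 → V) (i : ZMod 5) : Set V :=
  {w | w ∉ Set.range v ∧ ∀ j : ZMod 5, G.Adj w (v j) ↔ (j = i ∨ j = i + 1)}

/-- `Y_i`: vertices outside the five-cycle whose neighbours on the cycle are
exactly `v i, v (i+1), v (i+2), v (i+3)`. -/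
def cycY {V : Type*} (G : SimpleGraph V) (v : ZMod 5 → V) (i : ZMod 5) : Set V :=
  {w | w ∉ Set.range v ∧
    ∀ j : ZMod 5, G.Adj w (v j) ↔ (j = i ∨ j = i + 1 ∨ j = i + 2 ∨ j = i + 3)}

/-- `R`: vertices outside the five-cycle with no neighbour on the cycle. -/
def cycR {V : Type*} (G : SimpleGraph V) (v : ZMod 5 → V) : Set V :=
  {w | w ∉ Set.range v ∧ ∀ j : ZMod 5, ¬ G.Adj w (v j)}

/-! Let `Y` be the union of the sets `Y_j` over the induced five-cycle `C`. Apart from `C ∪ Y`, only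
the sets `X_i`, `X_{i+1}` and `X_{i+3}` remain. Each of these is a clique, complete to a clique
`core` of `C ∪ Y` and to nothing else there, and any two of them are joined by a matching. So
after colouring `C ∪ Y`, at least `|X_k|` colours are free on `X_k`, and the three cliques
can be coloured greedily one after another by Hall's theorem: in the last step each free colour is
blocked for at most one vertex by each of the two earlier cliques, and two free colours which one
of them does not use suffice for Hall's condition. With at least six colours one palette on `C ∪ Y`
works for every `G`; with five colours the order of the cliques depends on which `Y_j` are empty. -/

section ListColoring

variable {V α : Type*} {G : SimpleGraph V}

lemma exists_injective_avoiding {ι : Type*} [Finite ι] {P Q : ι → α → Prop}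
    (hP : Relator.BiUnique P) (hQ : Relator.LeftUnique Q) {L : Finset α}
    (hcard : Nat.card ι ≤ L.card) {p q : α} (hp : p ∈ L) (hq : q ∈ L) (hpq : p ≠ q)
    (hQp : ∀ t, ¬ Q t p) (hQq : ∀ t, ¬ Q t q) :
    ∃ f : ι → α, f.Injective ∧ ∀ t, f t ∈ L ∧ ¬ P t (f t) ∧ ¬ Q t (f t) := by
  classical
  have := Fintype.ofFinite ι
  let avail (t : ι) : Finset α := {c ∈ L | ¬ P t c ∧ ¬ Q t c}
  have mem_avail {t : ι} {c : α} : c ∈ avail t ↔ c ∈ L ∧ ¬ P t c ∧ ¬ Q t c := Finset.mem_filter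
  suffices hall : ∀ s : Finset ι, s.card ≤ (s.biUnion avail).card by
    obtain ⟨f, hf, hfa⟩ := (Finset.all_card_le_biUnion_card_iff_exists_injective avail).1 hall
    exact ⟨f, hf, fun t ↦ mem_avail.1 (hfa t)⟩
  have hPL {t t' : ι} {c : α} (ht : P t c) (ht' : P t' c) : t = t' := hP.1 ht ht'
  have hPR {t : ι} {c c' : α} (hc : P t c) (hc' : P t c') : c = c' := hP.2 hc hc'
  have hQL {t t' : ι} {c : α} (ht : Q t c) (ht' : Q t' c) : t = t' := hQ ht ht'
  intro s
  obtain hs | hs | hs : s.card ≤ 1 ∨ s.card = 2 ∨ 2 < s.card := by lia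
  · obtain rfl | ⟨t, ht⟩ := s.eq_empty_or_nonempty
    · simp
    · refine hs.trans (Finset.card_pos.2 ?_)
      obtain h | h : p ∈ avail t ∨ q ∈ avail t := by grind
      · exact ⟨p, Finset.mem_biUnion.2 ⟨t, ht, h⟩⟩
      · exact ⟨q, Finset.mem_biUnion.2 ⟨t, ht, h⟩⟩
  · obtain ⟨t, t', htt', rfl⟩ := Finset.card_eq_two.1 hs
    have mem_union {c : α} (hc : c ∈ L) (hQc : ∀ t, ¬ Q t c) :
        c ∈ ({t, t'} : Finset ι).biUnion avail := by
      rw [Finset.biUnion_insert, Finset.singleton_biUnion]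
      grind
    rw [hs, ← Finset.card_pair hpq]
    exact Finset.card_le_card <|
      Finset.insert_subset (mem_union hp hQp) (Finset.singleton_subset_iff.2 (mem_union hq hQq))
  · -- Each colour is blocked for at most two elements of `ι`, so three of them see all of `L`.
    obtain ⟨t₁, t₂, t₃, h₁, h₂, h₃, h₁₂, h₁₃, h₂₃⟩ := Finset.two_lt_card_iff.1 hs
    have hL : L ⊆ s.biUnion avail := by grind
    calc s.card ≤ Nat.card ι := by rw [Nat.card_eq_fintype_card]; exact Finset.card_le_univ s
      _ ≤ L.card := hcard
      _ ≤ (s.biUnion avail).card := Finset.card_le_card hL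

/-- `f` colours the subgraph of `G` induced on `S` properly; its values outside `S` are
irrelevant. -/
def IsProperOn (G : SimpleGraph V) (f : V → α) (S : Set V) : Prop :=
  ∀ ⦃x⦄, x ∈ S → ∀ ⦃y⦄, y ∈ S → G.Adj x y → f x ≠ f y

/-- The edges of `G` between `A` and `B` form a matching. -/
def IsMatched (G : SimpleGraph V) (A B : Set V) : Prop :=
  (∀ a ∈ A, (G.neighborSet a ∩ B).Subsingleton) ∧ ∀ b ∈ B, (G.neighborSet b ∩ A).Subsingleton

lemma isMatched_empty_left (B : Set V) : IsMatched G ∅ B := by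
  simp [IsMatched]

lemma IsMatched.biUnique_conflict {A T : Set V} {f : V → α} (h : IsMatched G A T)
    (hf : A.InjOn f) :
    Relator.BiUnique fun (t : T) (c : α) ↦ ∃ a ∈ A, G.Adj a t ∧ f a = c := by
  constructor
  · rintro t t' c ⟨a, ha, hat, rfl⟩ ⟨a', ha', hat', haa'⟩
    obtain rfl := hf ha' ha haa'
    exact Subtype.ext (h.1 a' ha' ⟨hat, t.2⟩ ⟨hat', t'.2⟩)
  · rintro t c c' ⟨a, ha, hat, rfl⟩ ⟨a', ha', hat', rfl⟩
    rw [h.2 t t.2 ⟨hat.symm, ha⟩ ⟨hat'.symm, ha'⟩]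

lemma IsProperOn.exists_extend_of_injective {f : V → α} {S T : Set V} (hf : IsProperOn G f S)
    (hST : Disjoint S T) {φ : T → α} (hφ : φ.Injective)
    (hcross : ∀ s ∈ S, ∀ t : T, G.Adj s t → f s ≠ φ t) :
    ∃ g : V → α, S.EqOn g f ∧ (∀ t : T, g t = φ t) ∧ T.InjOn g ∧ IsProperOn G g (S ∪ T) := by
  classical
  let g (x : V) : α := if hx : x ∈ T then φ ⟨x, hx⟩ else f x
  have hgS : S.EqOn g f := fun s hs ↦ dif_neg (hST.notMem_of_mem_left hs)
  have hgT (t : T) : g t = φ t := dif_pos t.2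
  have hinj : T.InjOn g := fun t ht t' ht' htt' ↦ congrArg Subtype.val <|
    hφ (((hgT ⟨t, ht⟩).symm.trans htt').trans (hgT ⟨t', ht'⟩))
  refine ⟨g, hgS, hgT, hinj, ?_⟩
  rintro x (hx | hx) y (hy | hy) hxy
  · rw [hgS hx, hgS hy]
    exact hf hx hy hxy
  · rw [hgS hx, hgT ⟨y, hy⟩]
    exact hcross x hx ⟨y, hy⟩ hxy
  · rw [hgS hy, hgT ⟨x, hx⟩]
    exact (hcross y hy ⟨x, hx⟩ hxy.symm).symm
  · exact fun h ↦ hxy.ne (hinj hx hy h)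

lemma IsProperOn.exists_extend {f : V → α} {S A B T : Set V} {L : Set α} [Finite V] [Finite α]
    (hf : IsProperOn G f S) (hST : Disjoint S T) (hcard : T.ncard ≤ L.ncard)
    (hA : IsMatched G A T) (hB : IsMatched G B T) (hfA : A.InjOn f) (hfB : B.InjOn f)
    (hfL : ∀ s ∈ S, ∀ t ∈ T, G.Adj s t → f s ∈ L → s ∈ A ∪ B)
    (hL : (L \ f '' B).Nontrivial ∨ L.Subsingleton ∧ (L \ f '' (A ∪ B)).Nonempty) :
    ∃ g : V → α, S.EqOn g f ∧ T.MapsTo g L ∧ T.InjOn g ∧ IsProperOn G g (S ∪ T) := by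
  suffices hφ : ∃ φ : T → α, φ.Injective ∧ ∀ t, φ t ∈ L ∧
      (¬ ∃ a ∈ A, G.Adj a t ∧ f a = φ t) ∧ ¬ ∃ b ∈ B, G.Adj b t ∧ f b = φ t by
    obtain ⟨φ, hφ, hφL⟩ := hφ
    obtain ⟨g, hgS, hgT, hinj, hg⟩ := hf.exists_extend_of_injective hST hφ fun s hs t hst heq ↦ by
      obtain hs' | hs' := hfL s hs t t.2 hst (heq ▸ (hφL t).1)
      · exact (hφL t).2.1 ⟨s, hs', hst, heq⟩
      · exact (hφL t).2.2 ⟨s, hs', hst, heq⟩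
    exact ⟨g, hgS, fun t ht ↦ hgT ⟨t, ht⟩ ▸ (hφL ⟨t, ht⟩).1, hinj, hg⟩
  obtain ⟨p, ⟨hp, hpB⟩, q, ⟨hq, hqB⟩, hpq⟩ | ⟨hLsub, p, hp, hpAB⟩ := hL
  · obtain ⟨φ, hφ, hφL⟩ := exists_injective_avoiding (hA.biUnique_conflict hfA)
      (hB.biUnique_conflict hfB).1 (L := L.toFinite.toFinset)
      (by rwa [← Set.ncard_eq_toFinset_card, Nat.card_coe_set_eq]) (by simpa) (by simpa) hpq
      (fun _ ⟨b, hb, _, hbp⟩ ↦ hpB ⟨b, hb, hbp⟩) (fun _ ⟨b, hb, _, hbq⟩ ↦ hqB ⟨b, hb, hbq⟩)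
    exact ⟨φ, hφ, fun t ↦ by simpa using hφL t⟩
  · have hT : T.Subsingleton :=
      Set.ncard_le_one_iff_subsingleton.1 (hcard.trans (Set.ncard_le_one_iff_subsingleton.2 hLsub))
    refine ⟨fun _ ↦ p, fun t t' _ ↦ Subtype.ext (hT t.2 t'.2), fun t ↦ ⟨hp, ?_, ?_⟩⟩
    · exact fun ⟨a, ha, _, hap⟩ ↦ hpAB ⟨a, .inl ha, hap⟩
    · exact fun ⟨b, hb, _, hbp⟩ ↦ hpAB ⟨b, .inr hb, hbp⟩

end ListColoring

section ForbiddenSubgraphs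

variable {V : Type*} {G : SimpleGraph V}

lemma not_free_of_forall_lt {ι : Type*} [LinearOrder ι] {H : SimpleGraph ι} (f : ι → V)
    (hf : ∀ i j, i < j → f i ≠ f j ∧ (G.Adj (f i) (f j) ↔ H.Adj i j)) : ¬ _root_.Free G H := by
  have hinj : f.Injective := Function.Injective.of_lt_imp_ne fun i j hij ↦ (hf i j hij).1
  refine fun h ↦ h.false ⟨⟨f, hinj⟩, fun {i j} ↦ ?_⟩
  obtain hij | rfl | hij := lt_trichotomy i j
  · exact (hf i j hij).2
  · simp
  · rw [G.adj_comm, H.adj_comm]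
    exact (hf j i hij).2

lemma adj_of_free_claw (hclaw : _root_.Free G claw) {a e x y : V} (hae : G.Adj a e)
    (hax : G.Adj a x) (hay : G.Adj a y) (hex : ¬ G.Adj e x) (hey : ¬ G.Adj e y) (hex' : e ≠ x)
    (hey' : e ≠ y) (hxy : x ≠ y) : G.Adj x y := by
  by_contra
  refine not_free_of_forall_lt ![a, e, x, y] ?_ hclaw
  simp [Fin.forall_fin_succ, claw, hae.ne, hax.ne, hay.ne, *]

lemma adj_of_free_K5e (hK5e : _root_.Free G K5e) {a b c d e : V} (hab : a ≠ b)
    (hac : G.Adj a c) (had : G.Adj a d) (hae : G.Adj a e)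
    (hbc : G.Adj b c) (hbd : G.Adj b d) (hbe : G.Adj b e)
    (hcd : G.Adj c d) (hce : G.Adj c e) (hde : G.Adj d e) : G.Adj a b := by
  by_contra
  refine not_free_of_forall_lt ![a, b, c, d, e] ?_ hK5e
  simp [Fin.forall_fin_succ, K5e, hac.ne, had.ne, hae.ne, hbc.ne, hbd.ne, hbe.ne, hcd.ne, hce.ne,
    hde.ne, *]

lemma not_free_P5twin {a b c d e t : V} (hab : G.Adj a b) (hbc : G.Adj b c) (hcd : G.Adj c d)
    (hde : G.Adj d e) (hbt : G.Adj b t) (hct : G.Adj c t) (hdt : G.Adj d t) (hac : ¬ G.Adj a c)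
    (had : ¬ G.Adj a d) (hae : ¬ G.Adj a e) (hat : ¬ G.Adj a t) (hbd : ¬ G.Adj b d)
    (hbe : ¬ G.Adj b e) (hce : ¬ G.Adj c e) (het : ¬ G.Adj e t) : ¬ _root_.Free G P5twin := by
  refine not_free_of_forall_lt ![a, b, c, d, e, t] ?_
  have hne : a ≠ c ∧ a ≠ d ∧ a ≠ e ∧ a ≠ t ∧ b ≠ d ∧ b ≠ e ∧ c ≠ e ∧ e ≠ t := by
    grind [G.adj_comm]
  simp [Fin.forall_fin_succ, P5twin, hab.ne, hbc.ne, hcd.ne, hde.ne, hbt.ne, hct.ne, hdt.ne, *]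

/-- The vertices `v 0, …, v 4` form an induced five-cycle of `G`, in this cyclic order. -/
def IsInducedC5 (G : SimpleGraph V) (v : ZMod 5 → V) : Prop :=
  ∀ i j, G.Adj (v i) (v j) ↔ j = i + 1 ∨ i = j + 1

variable {v : ZMod 5 → V} {i j : ZMod 5} {x y : V}

lemma IsInducedC5.injective (hC : IsInducedC5 G v) : v.Injective := by
  intro i j hij
  have h₁ := hC i (i + 1)
  have h₂ := hC i (i + 4)
  rw [hij, hC] at h₁ h₂
  grind

lemma IsInducedC5.not_forall_adj (hC : IsInducedC5 G v) (hW5 : _root_.Free G wheel5) :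
    ¬ ∀ j, G.Adj (v j) x := by
  intro hx
  refine not_free_of_forall_lt ![v 0, v 1, v 2, v 3, v 4, x] ?_ hW5
  simp +decide [Fin.forall_fin_succ, wheel5, hC _ _, hx, (hx _).ne, hC.injective.eq_iff]

lemma IsInducedC5.adj_add_three_or_adj_add_four (hC : IsInducedC5 G v) (hC5t : _root_.Free G C5twin)
    (h₀ : G.Adj (v i) x) (h₁ : G.Adj (v (i + 1)) x) (h₂ : G.Adj (v (i + 2)) x)
    (hx : x ∉ Set.range v) : G.Adj (v (i + 3)) x ∨ G.Adj (v (i + 4)) x := by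
  by_contra! h
  have hne (j : ZMod 5) : v j ≠ x := fun hj ↦ hx ⟨j, hj⟩
  refine not_free_of_forall_lt ![v (i + 1), v (i + 2), v (i + 3), v (i + 4), v i, x] ?_ hC5t
  simp +decide [Fin.forall_fin_succ, C5twin, hC _ _, h₀, h₁, h₂, h, hne, hC.injective.eq_iff,
    add_assoc]

lemma mem_cycX_iff :
    x ∈ cycX G v i ↔ x ∉ Set.range v ∧ ∀ j, G.Adj x (v j) ↔ j = i ∨ j = i + 1 :=
  Iff.rfl

lemma mem_cycY_iff : x ∈ cycY G v i ↔
    x ∉ Set.range v ∧ ∀ j, G.Adj x (v j) ↔ j = i ∨ j = i + 1 ∨ j = i + 2 ∨ j = i + 3 :=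
  Iff.rfl

lemma zmod_five_eq_or_eq_add (i j : ZMod 5) :
    j = i ∨ j = i + 1 ∨ j = i + 2 ∨ j = i + 3 ∨ j = i + 4 := by
  decide +revert

lemma exists_eq_path_of_zmod_five : ∀ s : Finset (ZMod 5), s.Nonempty → s ≠ .univ →
    (∀ i ∈ s, i + 1 ∈ s ∨ i + 4 ∈ s) → (∀ i, s ≠ {i, i + 1, i + 2}) →
    ∃ i, s = {i, i + 1} ∨ s = {i, i + 1, i + 2, i + 3} := by
  decide

lemma disjoint_cycX_cycX (hij : i ≠ j) : Disjoint (cycX G v i) (cycX G v j) :=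
  Set.disjoint_left.2 fun x hx hx' ↦ by
    have hi := (hx'.2 i).1 ((hx.2 i).2 (.inl rfl))
    have hi' := (hx'.2 (i + 1)).1 ((hx.2 (i + 1)).2 (.inr rfl))
    grind

lemma disjoint_cycX_cycY : Disjoint (cycX G v i) (cycY G v j) :=
  Set.disjoint_left.2 fun x hx hx' ↦ by
    have h₀ := (hx.2 j).1 ((hx'.2 j).2 (by simp))
    have h₁ := (hx.2 (j + 1)).1 ((hx'.2 (j + 1)).2 (by simp))
    have h₂ := (hx.2 (j + 2)).1 ((hx'.2 (j + 2)).2 (by simp))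
    grind

lemma disjoint_cycY_cycY (hij : i ≠ j) : Disjoint (cycY G v i) (cycY G v j) :=
  Set.disjoint_left.2 fun x hx hx' ↦ by
    have hi : ¬ G.Adj x (v (i + 4)) := by grind [hx.2 (i + 4)]
    have hcases := zmod_five_eq_or_eq_add j (i + 4)
    rw [hx'.2] at hi
    grind

lemma isClique_cycX (hC : IsInducedC5 G v) (hclaw : _root_.Free G claw) :
    G.IsClique (cycX G v i) := by
  intro x hx y hy hxy
  apply adj_of_free_claw hclaw (a := v i) (e := v (i + 4)) <;>
    grind [mem_cycX_iff, IsInducedC5, G.adj_comm]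

lemma subsingleton_cycY (hC : IsInducedC5 G v) (hclaw : _root_.Free G claw)
    (hK5e : _root_.Free G K5e) : (cycY G v i).Subsingleton := by
  intro x hx y hy
  by_contra hxy
  have hadj : G.Adj x y := by
    apply adj_of_free_claw hclaw (a := v i) (e := v (i + 4)) <;>
      grind [mem_cycY_iff, IsInducedC5, G.adj_comm]
  have : G.Adj (v i) (v (i + 2)) := by
    apply adj_of_free_K5e hK5e (c := x) (d := y) (e := v (i + 1)) <;>
      grind [mem_cycY_iff, IsInducedC5, G.adj_comm, hC.injective, Function.Injective]
  grind [IsInducedC5]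

lemma adj_cycX_cycY_iff (hC : IsInducedC5 G v) (hclaw : _root_.Free G claw)
    (hx : x ∈ cycX G v i) (hy : y ∈ cycY G v j) : G.Adj x y ↔ j = i ∨ j = i + 3 := by
  have hxy : x ≠ y := disjoint_cycX_cycY.ne_of_mem hx hy
  constructor
  · intro hadj
    by_contra hj
    have hcases := zmod_five_eq_or_eq_add i j
    have : G.Adj (v (i + 2)) (v (i + 4)) := by
      apply adj_of_free_claw hclaw (a := y) (e := x) <;>
        grind [mem_cycX_iff, mem_cycY_iff, G.adj_comm, hC.injective, Function.Injective]
    grind [IsInducedC5]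
  · rintro (rfl | rfl)
    · apply adj_of_free_claw hclaw (a := v j) (e := v (j + 4)) <;>
        grind [mem_cycX_iff, mem_cycY_iff, IsInducedC5, G.adj_comm]
    · apply adj_of_free_claw hclaw (a := v (i + 1)) (e := v (i + 2)) <;>
        grind [mem_cycX_iff, mem_cycY_iff, IsInducedC5, G.adj_comm]

lemma not_adj_of_mem_cycY_of_mem_cycY_add_one (hC : IsInducedC5 G v) (hK5e : _root_.Free G K5e)
    (hx : x ∈ cycY G v i) (hy : y ∈ cycY G v (i + 1)) : ¬ G.Adj x y := by
  intro hxy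
  have : G.Adj (v (i + 1)) (v (i + 3)) := by
    apply adj_of_free_K5e hK5e (c := x) (d := y) (e := v (i + 2)) <;>
      grind [mem_cycY_iff, IsInducedC5, G.adj_comm, hC.injective, Function.Injective]
  grind [IsInducedC5]

lemma adj_of_mem_cycY_of_mem_cycY_add_three (hC : IsInducedC5 G v) (hclaw : _root_.Free G claw)
    (hK5e : _root_.Free G K5e) (hX : (cycX G v i).Nonempty)
    (hx : x ∈ cycY G v i) (hy : y ∈ cycY G v (i + 3)) : G.Adj x y := by
  obtain ⟨w, hw⟩ := hX
  have hxy : x ≠ y := (disjoint_cycY_cycY (by grind)).ne_of_mem hx hy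
  have hwx := (adj_cycX_cycY_iff hC hclaw hw hx).2 (.inl rfl)
  have hwy := (adj_cycX_cycY_iff hC hclaw hw hy).2 (.inr rfl)
  apply adj_of_free_K5e hK5e (c := w) (d := v i) (e := v (i + 1)) <;>
    grind [mem_cycX_iff, mem_cycY_iff, IsInducedC5, G.adj_comm]

lemma subsingleton_neighborSet_inter_cycX (hC : IsInducedC5 G v) (hclaw : _root_.Free G claw)
    (hK5e : _root_.Free G K5e) (hP5t : _root_.Free G P5twin) (hij : i ≠ j) (hx : x ∈ cycX G v i) :
    (G.neighborSet x ∩ cycX G v j).Subsingleton := by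
  rintro y ⟨hxy : G.Adj x y, hy⟩ z ⟨hxz : G.Adj x z, hz⟩
  by_contra hne
  have hyz : G.Adj y z := isClique_cycX hC hclaw hy hz hne
  obtain h | rfl | rfl | rfl | rfl := zmod_five_eq_or_eq_add i j
  · exact hij h.symm
  · have : G.Adj x (v (i + 2)) := by
      apply adj_of_free_K5e hK5e (c := v (i + 1)) (d := y) (e := z) <;>
        grind [mem_cycX_iff, IsInducedC5, G.adj_comm]
    grind [mem_cycX_iff]
  · refine not_free_P5twin (a := v (i + 1)) (b := x) (c := y) (d := v (i + 3)) (e := v (i + 4))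
      (t := z) ?_ ?_ ?_ ?_ ?_ ?_ ?_ ?_ ?_ ?_ ?_ ?_ ?_ ?_ ?_ hP5t <;>
      grind [mem_cycX_iff, IsInducedC5, G.adj_comm]
  · refine not_free_P5twin (a := v i) (b := x) (c := y) (d := v (i + 3)) (e := v (i + 2))
      (t := z) ?_ ?_ ?_ ?_ ?_ ?_ ?_ ?_ ?_ ?_ ?_ ?_ ?_ ?_ ?_ hP5t <;>
      grind [mem_cycX_iff, IsInducedC5, G.adj_comm]
  · have : G.Adj x (v (i + 4)) := by
      apply adj_of_free_K5e hK5e (c := v i) (d := y) (e := z) <;>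
        grind [mem_cycX_iff, IsInducedC5, G.adj_comm]
    grind [mem_cycX_iff]

lemma isMatched_cycX_cycX (hC : IsInducedC5 G v) (hclaw : _root_.Free G claw)
    (hK5e : _root_.Free G K5e) (hP5t : _root_.Free G P5twin) (hij : i ≠ j) :
    IsMatched G (cycX G v i) (cycX G v j) :=
  ⟨fun _ hx ↦ subsingleton_neighborSet_inter_cycX hC hclaw hK5e hP5t hij hx,
    fun _ hy ↦ subsingleton_neighborSet_inter_cycX hC hclaw hK5e hP5t hij.symm hy⟩

lemma exists_mem_cycX_or_mem_cycY (hC : IsInducedC5 G v) (hclaw : _root_.Free G claw)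
    (hW5 : _root_.Free G wheel5) (hC5t : _root_.Free G C5twin) (hx : x ∉ Set.range v)
    (hxR : x ∉ cycR G v) : ∃ i, x ∈ cycX G v i ∨ x ∈ cycY G v i := by
  classical
  let N : Finset (ZMod 5) := {j | G.Adj x (v j)}
  have mem_N {j : ZMod 5} : j ∈ N ↔ G.Adj x (v j) := by simp [N]
  have hxv (j : ZMod 5) : x ≠ v j := fun h ↦ hx ⟨j, h.symm⟩
  have hN_nonempty : N.Nonempty := by
    by_contra h
    exact hxR ⟨hx, fun j hj ↦ h ⟨j, mem_N.2 hj⟩⟩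
  have hN_ne_univ : N ≠ .univ := fun h ↦
    hC.not_forall_adj hW5 fun j ↦ (mem_N.1 (h ▸ Finset.mem_univ j)).symm
  have hN_succ_or_pred : ∀ j ∈ N, j + 1 ∈ N ∨ j + 4 ∈ N := by
    intro j hj
    by_contra! h
    have : G.Adj x (v (j + 4)) := by
      apply adj_of_free_claw hclaw (a := v j) (e := v (j + 1)) <;>
        grind [IsInducedC5, G.adj_comm, hC.injective, Function.Injective]
    exact h.2 (mem_N.2 this)
  have hN_ne_three (j : ZMod 5) : N ≠ {j, j + 1, j + 2} := by
    intro h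
    have := hC.adj_add_three_or_adj_add_four hC5t (x := x) (i := j)
    grind [G.adj_comm]
  obtain ⟨i, h⟩ := exists_eq_path_of_zmod_five N hN_nonempty hN_ne_univ hN_succ_or_pred hN_ne_three
  refine ⟨i, h.imp (fun h ↦ ⟨hx, fun j ↦ ?_⟩) fun h ↦ ⟨hx, fun j ↦ ?_⟩⟩ <;> simp [← mem_N, h]

end ForbiddenSubgraphs

section Base

variable {V α : Type*} {G : SimpleGraph V} {v : ZMod 5 → V} {i j : ZMod 5} {x y : V}

/-- The five-cycle together with all the sets `Y_j`; the remaining vertices lie in the cliques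
`X_i`, or in `R`. -/
def base (G : SimpleGraph V) (v : ZMod 5 → V) : Set V :=
  Set.range v ∪ ⋃ j, cycY G v j

/-- The part of `base G v` that is complete to `X_i`. -/
def core (G : SimpleGraph V) (v : ZMod 5 → V) (i : ZMod 5) : Set V :=
  {v i, v (i + 1)} ∪ cycY G v i ∪ cycY G v (i + 3)

lemma mem_base_iff : x ∈ base G v ↔ (∃ j, v j = x) ∨ ∃ j, x ∈ cycY G v j := by
  simp [base]

lemma mem_core_iff :
    x ∈ core G v i ↔ x = v i ∨ x = v (i + 1) ∨ x ∈ cycY G v i ∨ x ∈ cycY G v (i + 3) := by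
  simp [core, or_assoc]

lemma core_subset_base : core G v i ⊆ base G v := by
  intro x hx
  rw [mem_core_iff] at hx
  grind [mem_base_iff]

lemma disjoint_base_cycX : Disjoint (base G v) (cycX G v i) := by
  refine Set.disjoint_left.2 fun x hx hxX ↦ ?_
  obtain hxv | ⟨j, hxY⟩ := mem_base_iff.1 hx
  · exact hxX.1 hxv
  · exact disjoint_cycX_cycY.ne_of_mem hxX hxY rfl

lemma adj_cycX_base_iff (hC : IsInducedC5 G v) (hclaw : _root_.Free G claw)
    (hx : x ∈ cycX G v i) (hy : y ∈ base G v) : G.Adj x y ↔ y ∈ core G v i := by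
  rw [mem_core_iff]
  obtain ⟨j, rfl⟩ | ⟨j, hy⟩ := mem_base_iff.1 hy
  · have hvY (k : ZMod 5) : v j ∉ cycY G v k := fun h ↦ h.1 ⟨j, rfl⟩
    simp [hx.2 j, hC.injective.eq_iff, hvY]
  · have hyv (k : ZMod 5) : y ≠ v k := fun h ↦ hy.1 ⟨k, h.symm⟩
    have hyY (k : ZMod 5) : y ∈ cycY G v k ↔ j = k :=
      ⟨fun h ↦ by_contra fun hjk ↦ (disjoint_cycY_cycY hjk).ne_of_mem hy h rfl, fun h ↦ h ▸ hy⟩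
    simp [adj_cycX_cycY_iff hC hclaw hx hy, hyv, hyY]

lemma isClique_core (hC : IsInducedC5 G v) (hclaw : _root_.Free G claw)
    (hK5e : _root_.Free G K5e) (hX : (cycX G v i).Nonempty) : G.IsClique (core G v i) := by
  have hvv : G.Adj (v i) (v (i + 1)) := by simp [hC _ _]
  have hvY {y : V} (hy : y ∈ cycY G v i ∨ y ∈ cycY G v (i + 3)) :
      G.Adj y (v i) ∧ G.Adj y (v (i + 1)) := by
    grind [mem_cycY_iff]
  have hYY {y z : V} (hy : y ∈ cycY G v i) (hz : z ∈ cycY G v (i + 3)) : G.Adj y z :=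
    adj_of_mem_cycY_of_mem_cycY_add_three hC hclaw hK5e hX hy hz
  have hsub (j : ZMod 5) : (cycY G v j).Subsingleton := subsingleton_cycY hC hclaw hK5e
  intro y hy z hz hyz
  rw [mem_core_iff] at hy hz
  grind [G.adj_comm, Set.Subsingleton]

lemma ncard_cycX_add_ncard_core_le [Finite V] (hC : IsInducedC5 G v)
    (hclaw : _root_.Free G claw) (hK5e : _root_.Free G K5e) (hX : (cycX G v i).Nonempty) :
    (cycX G v i).ncard + (core G v i).ncard ≤ G.cliqueNum := by
  classical
  have hclique : G.IsClique (cycX G v i ∪ core G v i) := by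
    have := G.symm
    refine Set.pairwise_union_of_symm.2 ⟨isClique_cycX hC hclaw,
      isClique_core hC hclaw hK5e hX, fun x hx y hy _ ↦ ?_⟩
    exact (adj_cycX_base_iff hC hclaw hx (core_subset_base hy)).2 hy
  rw [← Set.ncard_union_eq (disjoint_base_cycX.mono_left core_subset_base).symm,
    Set.ncard_eq_toFinset_card _ (Set.toFinite _)]
  exact IsClique.card_le_cliqueNum (tc := by simpa using hclique)

/-- The colours available for the vertices of `X_i` once `base G v` has been coloured by `f`. -/
def freeColors (G : SimpleGraph V) (v : ZMod 5 → V) (f : V → α) (i : ZMod 5) : Set α :=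
  (f '' core G v i)ᶜ

lemma freeColors_congr {f g : V → α} (h : (base G v).EqOn g f) :
    freeColors G v g i = freeColors G v f i := by
  rw [freeColors, freeColors, (h.mono core_subset_base).image_eq]

lemma ncard_cycX_le_ncard_freeColors [Finite V] [Finite α] (hC : IsInducedC5 G v)
    (hclaw : _root_.Free G claw) (hK5e : _root_.Free G K5e) (hcard : G.cliqueNum ≤ Nat.card α)
    (f : V → α) : (cycX G v i).ncard ≤ (freeColors G v f i).ncard := by
  obtain hX | hX := (cycX G v i).eq_empty_or_nonempty
  · simp [hX]
  · have hclique := ncard_cycX_add_ncard_core_le hC hclaw hK5e hX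
    have hcompl := Set.ncard_add_ncard_compl (f '' core G v i)
    have himage := Set.ncard_image_le (f := f) (Set.toFinite (core G v i))
    rw [freeColors]
    lia

lemma IsProperOn.exists_extend_cycX [Finite V] [Finite α] (hC : IsInducedC5 G v)
    (hclaw : _root_.Free G claw) (hK5e : _root_.Free G K5e) (hcard : G.cliqueNum ≤ Nat.card α)
    {f : V → α} {S A B : Set V} (hf : IsProperOn G f S) (hS : S = base G v ∪ (A ∪ B))
    (hA : IsMatched G A (cycX G v i)) (hB : IsMatched G B (cycX G v i))
    (hAi : Disjoint A (cycX G v i)) (hBi : Disjoint B (cycX G v i))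
    (hfA : A.InjOn f) (hfB : B.InjOn f)
    (hL : (freeColors G v f i \ f '' B).Nontrivial ∨ (freeColors G v f i).Subsingleton ∧
      (freeColors G v f i \ f '' (A ∪ B)).Nonempty) :
    ∃ g : V → α, S.EqOn g f ∧ (cycX G v i).MapsTo g (freeColors G v f i) ∧
      (cycX G v i).InjOn g ∧ IsProperOn G g (S ∪ cycX G v i) := by
  subst hS
  refine hf.exists_extend
    (disjoint_base_cycX.union_left (hAi.union_left hBi))
    (ncard_cycX_le_ncard_freeColors hC hclaw hK5e hcard f) hA hB hfA hfB ?_ hL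
  rintro s (hs | hs) t ht hst hfs
  · exact absurd (Set.mem_image_of_mem f ((adj_cycX_base_iff hC hclaw ht hs).1 hst.symm)) hfs
  · exact hs

lemma nonempty_coloring_of_freeColors [Finite V] [Finite α] (hC : IsInducedC5 G v)
    (hclaw : _root_.Free G claw) (hK5e : _root_.Free G K5e) (hP5t : _root_.Free G P5twin)
    (hcard : G.cliqueNum ≤ Nat.card α) {f : V → α} (hf : IsProperOn G f (base G v))
    {p q r : ZMod 5} (hpq : p ≠ q) (hpr : p ≠ r) (hqr : q ≠ r)
    (hcover : ∀ x, x ∈ base G v ∪ cycX G v p ∪ cycX G v q ∪ cycX G v r)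
    (hp : (freeColors G v f p).Nonempty)
    (hq : (freeColors G v f q \ freeColors G v f p).Nonempty ∨ (freeColors G v f q).Nontrivial)
    (hr : (freeColors G v f r \ freeColors G v f q).Nontrivial ∨ (freeColors G v f r).Subsingleton ∧
      (freeColors G v f r \ (freeColors G v f p ∪ freeColors G v f q)).Nonempty) :
    Nonempty (G.Coloring α) := by
  obtain ⟨g, hgf, hgp, hgp_inj, hg⟩ := hf.exists_extend_cycX hC hclaw hK5e hcard (i := p)
    (A := ∅) (B := ∅) (by simp) (isMatched_empty_left _) (isMatched_empty_left _)
    (by simp) (by simp) (by simp) (by simp) <| by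
      simpa [hp] using (Set.subsingleton_or_nontrivial _).symm
  have hgq : freeColors G v g q = freeColors G v f q := freeColors_congr hgf
  obtain ⟨h, hhg, hhq, hhq_inj, hh⟩ := hg.exists_extend_cycX hC hclaw hK5e hcard (i := q)
    (A := cycX G v p) (B := ∅) (by simp) (isMatched_cycX_cycX hC hclaw hK5e hP5t hpq)
    (isMatched_empty_left _) (disjoint_cycX_cycX hpq) (by simp) hgp_inj (by simp) <| by
      rw [hgq]
      simp only [Set.image_empty, Set.sdiff_empty, Set.union_empty]
      obtain hsub | hnon := (freeColors G v f q).subsingleton_or_nontrivial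
      · exact .inr ⟨hsub, (hq.resolve_right hsub.not_nontrivial).mono
          (Set.sdiff_subset_sdiff_right hgp.image_subset)⟩
      · exact .inl hnon
  have hhr : freeColors G v h r = freeColors G v f r :=
    freeColors_congr ((hhg.mono Set.subset_union_left).trans hgf)
  have hhp : (cycX G v p).EqOn h g := hhg.mono Set.subset_union_right
  rw [hgq] at hhq
  obtain ⟨k, -, -, -, hk⟩ := hh.exists_extend_cycX hC hclaw hK5e hcard (i := r)
    (A := cycX G v p) (B := cycX G v q) (Set.union_assoc _ _ _)
    (isMatched_cycX_cycX hC hclaw hK5e hP5t hpr) (isMatched_cycX_cycX hC hclaw hK5e hP5t hqr)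
    (disjoint_cycX_cycX hpr) (disjoint_cycX_cycX hqr) (hgp_inj.congr hhp.symm) hhq_inj <| by
      rw [hhr, Set.image_union, hhp.image_eq]
      refine hr.imp (fun hr ↦ hr.mono ?_) (And.imp_right fun hr ↦ hr.mono ?_)
      · exact Set.sdiff_subset_sdiff_right hhq.image_subset
      · exact Set.sdiff_subset_sdiff_right
          (Set.union_subset_union hgp.image_subset hhq.image_subset)
  exact ⟨Coloring.mk k fun {x y} hxy ↦ hk (hcover x) (hcover y) hxy⟩

end Base

section Colorings

variable {V α : Type*} {G : SimpleGraph V} {v : ZMod 5 → V} {cv cy : ZMod 5 → α}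

lemma exists_isProperOn_base (hC : IsInducedC5 G v) (hclaw : _root_.Free G claw)
    (hK5e : _root_.Free G K5e) (hvv : ∀ i, cv i ≠ cv (i + 1))
    (hvy : ∀ i j, j ≠ i + 1 → cv i ≠ cy j) (hyy : ∀ i, cy i ≠ cy (i + 2)) :
    ∃ f : V → α, IsProperOn G f (base G v) ∧ (∀ i, f (v i) = cv i) ∧
      ∀ i, ∀ y ∈ cycY G v i, f y = cy i := by
  classical
  let f (x : V) : α := if hx : ∃ i, v i = x then cv hx.choose else
    if hx : ∃ i, x ∈ cycY G v i then cy hx.choose else cv 0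
  have hfv (i : ZMod 5) : f (v i) = cv i := by
    have hx : ∃ j, v j = v i := ⟨i, rfl⟩
    simp only [f, dif_pos hx, hC.injective hx.choose_spec]
  have hfY (i : ZMod 5) : ∀ y ∈ cycY G v i, f y = cy i := by
    intro y hy
    have hx : ∃ j, y ∈ cycY G v j := ⟨i, hy⟩
    have hi : hx.choose = i :=
      by_contra fun h ↦ (disjoint_cycY_cycY h).ne_of_mem hx.choose_spec hy rfl
    have hv : ¬ ∃ j, v j = y := hy.1
    simp only [f, dif_neg hv, dif_pos hx, hi]
  have hfvY {i j : ZMod 5} {y : V} (hy : y ∈ cycY G v j) (hadj : G.Adj y (v i)) :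
      f (v i) ≠ f y := by
    rw [hfv, hfY j y hy]
    exact hvy i j (by grind [mem_cycY_iff])
  refine ⟨f, fun x hx y hy hxy ↦ ?_, hfv, hfY⟩
  obtain ⟨i, rfl⟩ | ⟨i, hx⟩ := mem_base_iff.1 hx <;> obtain ⟨j, rfl⟩ | ⟨j, hy⟩ := mem_base_iff.1 hy
  · rw [hfv, hfv]
    obtain rfl | rfl := (hC i j).1 hxy
    exacts [hvv i, (hvv j).symm]
  · exact hfvY hy hxy.symm
  · exact (hfvY hx hxy).symm
  · rw [hfY i x hx, hfY j y hy]
    obtain rfl | rfl | rfl | rfl | rfl := zmod_five_eq_or_eq_add i j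
    · exact absurd (subsingleton_cycY hC hclaw hK5e hx hy) hxy.ne
    · exact absurd hxy (not_adj_of_mem_cycY_of_mem_cycY_add_one hC hK5e hx hy)
    · exact hyy i
    · simpa [add_assoc, show (3 + 2 : ZMod 5) = 0 from rfl] using (hyy (i + 3)).symm
    · exact absurd hxy.symm (not_adj_of_mem_cycY_of_mem_cycY_add_one hC hK5e hy
        (by simpa [add_assoc, show (4 + 1 : ZMod 5) = 0 from rfl] using hx))

lemma mem_freeColors_iff {f : V → α} (hfv : ∀ i, f (v i) = cv i)
    (hfY : ∀ i, ∀ y ∈ cycY G v i, f y = cy i) {i : ZMod 5} {c : α} :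
    c ∈ freeColors G v f i ↔ c ≠ cv i ∧ c ≠ cv (i + 1) ∧
      ((cycY G v i).Nonempty → c ≠ cy i) ∧ ((cycY G v (i + 3)).Nonempty → c ≠ cy (i + 3)) := by
  simp only [freeColors, Set.mem_compl_iff, Set.mem_image, mem_core_iff, Set.Nonempty]
  grind

lemma colorable_of_six_le [Finite V] (hC : IsInducedC5 G v) (hclaw : _root_.Free G claw)
    (hK5e : _root_.Free G K5e) (hP5t : _root_.Free G P5twin)
    (hcover : ∀ x, x ∈ base G v ∪ cycX G v 0 ∪ cycX G v 1 ∪ cycX G v 3)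
    {n : ℕ} (hn : 6 ≤ n) (hω : G.cliqueNum ≤ n) : G.Colorable n := by
  let kv : ZMod 5 → Fin 6 | 0 => 3 | 1 => 1 | 2 => 3 | 3 => 4 | 4 => 5
  let ky : ZMod 5 → Fin 6 | 0 => 0 | 1 => 0 | 2 => 1 | 3 => 2 | 4 => 2
  have hvv : ∀ i, kv i ≠ kv (i + 1) := by decide
  have hvy : ∀ i j, j ≠ i + 1 → kv i ≠ ky j := by decide
  have hyy : ∀ i, ky i ≠ ky (i + 2) := by decide
  have hcast : (Fin.castLE hn).Injective := Fin.castLE_injective hn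
  obtain ⟨f, hf, hfv, hfY⟩ := exists_isProperOn_base (cv := Fin.castLE hn ∘ kv)
    (cy := Fin.castLE hn ∘ ky) hC hclaw hK5e
    (fun i ↦ hcast.ne (hvv i)) (fun i j hij ↦ hcast.ne (hvy i j hij)) fun i ↦ hcast.ne (hyy i)
  have hL {i : ZMod 5} (c : Fin 6)
      (hc : c ≠ kv i ∧ c ≠ kv (i + 1) ∧ c ≠ ky i ∧ c ≠ ky (i + 3)) :
      Fin.castLE hn c ∈ freeColors G v f i :=
    (mem_freeColors_iff hfv hfY).2
      ⟨hcast.ne hc.1, hcast.ne hc.2.1, fun _ ↦ hcast.ne hc.2.2.1, fun _ ↦ hcast.ne hc.2.2.2⟩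
  have hv₁ : Fin.castLE hn 1 ∉ freeColors G v f 1 := fun h ↦
    ((mem_freeColors_iff hfv hfY).1 h).1 rfl
  have hv₂ : Fin.castLE hn 3 ∉ freeColors G v f 1 := fun h ↦
    ((mem_freeColors_iff hfv hfY).1 h).2.1 rfl
  obtain ⟨φ⟩ := nonempty_coloring_of_freeColors hC hclaw hK5e hP5t (by simpa) hf
    (p := 0) (q := 1) (r := 3) (by decide) (by decide) (by decide) hcover
    ⟨_, hL 4 (by decide)⟩
    (.inr ⟨_, hL 4 (by decide), _, hL 5 (by decide), hcast.ne (by decide)⟩)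
    (.inl ⟨_, ⟨hL 1 (by decide), hv₁⟩, _, ⟨hL 3 (by decide), hv₂⟩, hcast.ne (by decide)⟩)
  simpa using φ.colorable

lemma colorable_five [Finite V] (hC : IsInducedC5 G v) (hclaw : _root_.Free G claw)
    (hK5e : _root_.Free G K5e) (hP5t : _root_.Free G P5twin)
    (hcover : ∀ x, x ∈ base G v ∪ cycX G v 0 ∪ cycX G v 1 ∪ cycX G v 3)
    (hω : G.cliqueNum ≤ 5) : G.Colorable 5 := by
  -- `Y_j` reuses the colour of `v (j + 4)`, the only vertex of the cycle it does not see.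
  obtain ⟨f, hf, hfv, hfY⟩ := exists_isProperOn_base (cv := id) (cy := (· + 4)) hC hclaw hK5e
    (by decide) (by decide) (by decide)
  have h₀ (c : ZMod 5) : c ∈ freeColors G v f 0 ↔ c ≠ 0 ∧ c ≠ 1 ∧
      ((cycY G v 0).Nonempty → c ≠ 4) ∧ ((cycY G v 3).Nonempty → c ≠ 2) :=
    mem_freeColors_iff hfv hfY
  have h₁ (c : ZMod 5) : c ∈ freeColors G v f 1 ↔ c ≠ 1 ∧ c ≠ 2 ∧
      ((cycY G v 1).Nonempty → c ≠ 0) ∧ ((cycY G v 4).Nonempty → c ≠ 3) :=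
    mem_freeColors_iff hfv hfY
  have h₃ (c : ZMod 5) : c ∈ freeColors G v f 3 ↔ c ≠ 3 ∧ c ≠ 4 ∧
      ((cycY G v 3).Nonempty → c ≠ 2) ∧ ((cycY G v 1).Nonempty → c ≠ 0) :=
    mem_freeColors_iff hfv hfY
  suffices h : Nonempty (G.Coloring (ZMod 5)) by
    obtain ⟨φ⟩ := h
    simpa using φ.colorable
  have extend {p q r : ZMod 5} := nonempty_coloring_of_freeColors hC hclaw hK5e hP5t (α := ZMod 5)
    (by simpa using hω) hf (p := p) (q := q) (r := r)
  obtain hY₀ | hY₀ := (cycY G v 0).eq_empty_or_nonempty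
  · exact extend (p := 1) (q := 3) (r := 0) (by decide) (by decide) (by decide) (by grind)
      ⟨4, by simp +decide [h₁]⟩ (.inl ⟨1, by simp +decide [h₁, h₃]⟩)
      (.inl ⟨3, by simp +decide [h₀, h₃], 4, by simp +decide [h₀, h₃, hY₀]⟩)
  obtain hY₄ | hY₄ := (cycY G v 4).eq_empty_or_nonempty
  · exact extend (p := 0) (q := 3) (r := 1) (by decide) (by decide) (by decide) (by grind)
      ⟨3, by simp +decide [h₀]⟩ (.inl ⟨1, by simp +decide [h₀, h₃]⟩)
      (.inl ⟨3, by simp +decide [h₁, h₃, hY₄], 4, by simp +decide [h₁, h₃]⟩)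
  obtain hY₁ | hY₁ := (cycY G v 1).eq_empty_or_nonempty
  · exact extend (p := 1) (q := 0) (r := 3) (by decide) (by decide) (by decide) (by grind)
      ⟨4, by simp +decide [h₁]⟩ (.inl ⟨3, by simp +decide [h₀, h₁, hY₄]⟩)
      (.inl ⟨0, by simp +decide [h₀, h₃, hY₁], 1, by simp +decide [h₀, h₃]⟩)
  refine extend (p := 0) (q := 1) (r := 3) (by decide) (by decide) (by decide) hcover
    ⟨3, by simp +decide [h₀]⟩ (.inl ⟨4, by simp +decide [h₀, h₁, hY₀]⟩) ?_
  obtain hY₃ | hY₃ := (cycY G v 3).eq_empty_or_nonempty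
  · exact .inl ⟨1, by simp +decide [h₁, h₃], 2, by simp +decide [h₁, h₃, hY₃]⟩
  · have hL₃ : ∀ c ∈ freeColors G v f 3, c = 1 := by
      simp only [h₃, hY₁, hY₃, true_imp_iff]
      decide
    exact .inr ⟨fun c hc d hd ↦ (hL₃ c hc).trans (hL₃ d hd).symm,
      1, by simp +decide [h₀, h₁, h₃]⟩

lemma forall_mem_base_or_cycX (hC : IsInducedC5 G v) (hclaw : _root_.Free G claw)
    (hW5 : _root_.Free G wheel5) (hC5t : _root_.Free G C5twin) (hR : cycR G v = ∅)
    (hX₂ : cycX G v 2 = ∅) (hX₄ : cycX G v 4 = ∅) (x : V) :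
    x ∈ base G v ∪ cycX G v 0 ∪ cycX G v 1 ∪ cycX G v 3 := by
  by_cases hx : x ∈ Set.range v
  · exact .inl (.inl (.inl (.inl hx)))
  obtain ⟨i, hX | hY⟩ := exists_mem_cycX_or_mem_cycY hC hclaw hW5 hC5t hx (by simp [hR])
  · obtain rfl | rfl | rfl | rfl | rfl := zmod_five_eq_or_eq_add 0 i <;> simp_all
  · exact .inl (.inl (.inl (mem_base_iff.2 (.inr ⟨i, hY⟩))))

end Colorings

section Rotation

variable {V : Type*} {G : SimpleGraph V} {v : ZMod 5 → V} {i : ZMod 5}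

lemma IsInducedC5.rotate (hC : IsInducedC5 G v) (i : ZMod 5) :
    IsInducedC5 G fun j ↦ v (i + j) :=
  fun j k ↦ by simp [hC _ _, add_assoc]

lemma range_rotate : Set.range (fun j ↦ v (i + j)) = Set.range v :=
  (Equiv.addLeft i).surjective.range_comp v

lemma cycX_rotate (j : ZMod 5) : cycX G (fun k ↦ v (i + k)) j = cycX G v (i + j) := by
  ext x
  exact and_congr (by rw [range_rotate]) ((Equiv.addLeft i).forall_congr (by simp [add_assoc]))

lemma cycR_rotate : cycR G (fun j ↦ v (i + j)) = cycR G v := by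
  ext x
  exact and_congr (by rw [range_rotate]) ((Equiv.addLeft i).forall_congr (by simp))

end Rotation

theorem stmt_19_general {V : Type*} [Finite V] {G : SimpleGraph V}
    (hclaw : _root_.Free G claw) (hK5e : _root_.Free G K5e) (hW5 : _root_.Free G wheel5)
    (hC5t : _root_.Free G C5twin) (hP5t : _root_.Free G P5twin)
    {v : ZMod 5 → V} (hC : IsInducedC5 G v) {i : ZMod 5} (hR : cycR G v = ∅)
    (hX2 : cycX G v (i + 2) = ∅) (hX4 : cycX G v (i + 4) = ∅) :
    G.Colorable (max G.cliqueNum 5) := by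
  have hCi := hC.rotate i
  have hcover := forall_mem_base_or_cycX hCi hclaw hW5 hC5t (cycR_rotate.trans hR)
    ((cycX_rotate 2).trans hX2) ((cycX_rotate 4).trans hX4)
  obtain hω | hω := le_or_gt G.cliqueNum 5
  · rw [max_eq_right hω]
    exact colorable_five hCi hclaw hK5e hP5t hcover hω
  · rw [max_eq_left hω.le]
    exact colorable_of_six_le hCi hclaw hK5e hP5t hcover hω le_rfl

theorem stmt_19     {V : Type*} [Fintype V] (G : SimpleGraph V)
    (hconn : G.Connected)
    (hclaw : _root_.Free G claw) (h4K1 : _root_.Free G fourK1) (hK5e : _root_.Free G K5e)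
    (hW5 : _root_.Free G wheel5) (hC5t : _root_.Free G C5twin) (hP5t : _root_.Free G P5twin)
    (v : ZMod 5 → V) (hv : Function.Injective v)
    (hC : ∀ i j : ZMod 5, G.Adj (v i) (v j) ↔ (j = i + 1 ∨ i = j + 1))
    (i : ZMod 5)
    (hR : cycR G v = ∅)
    (hX2 : cycX G v (i + 2) = ∅) (hX4 : cycX G v (i + 4) = ∅)
    (homega : 5 ≤ G.cliqueNum) :
    G.chromaticNumber = (G.cliqueNum : ℕ∞) := by
  have hcol := stmt_19_general hclaw hK5e hW5 hC5t hP5t hC hR hX2 hX4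
  rw [max_eq_left homega] at hcol
  exact le_antisymm hcol.chromaticNumber_le G.cliqueNum_le_chromaticNumber
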